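/- arXiv:2410.02816 — 5 statements merged into one kernel-verified Lean document; each statement's English description precedes it below -/
import Mathlib

section
/- The bipolar max-product fuzzy relation equation max_{j=1..m} max(a_j^+ · x_j, a_j^- · n_P(x_j)) = 0 (with independent term b = 0) has a solution (x_1,...,x_m) ∈ [0,1]^m if and only if for each j ∈ {1,...,m}, either a_j^+ = 0 or a_j^- = 0. -/
open Finset
open scoped Classical

/-- Product negation: `nP 0 = 1`, `nP x = 0` for `x ≠ 0`. -/
noncomputable def nP (x : ℝ) : ℝ := if x = 0 then 1 else 0

/-- Residuated implication of the product: `resP z x = min 1 (z / x)` for `x > 0`,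
and `resP z 0 = 1`. -/
noncomputable def resP (z x : ℝ) : ℝ := if x = 0 then 1 else min 1 (z / x)

/-- Left-hand side of a bipolar max-product fuzzy relation equation:
`max_{j=1..m} max (a_j^+ * x_j) (a_j^- * nP (x_j))`. -/
noncomputable def eqLHS {m : ℕ} (hm : 0 < m) (ap an : Fin m → ℝ) (x : Fin m → ℝ) : ℝ :=
  Finset.univ.sup' ⟨⟨0, hm⟩, Finset.mem_univ _⟩
    (fun j => max (ap j * x j) (an j * nP (x j)))

/-- `x` is a solution of the bipolar max-product FRE with independent term `b`. -/
def IsSol {m : ℕ} (hm : 0 < m) (ap an : Fin m → ℝ) (b : ℝ) (x : Fin m → ℝ) : Prop :=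
  (∀ j, x j ∈ Set.Icc (0:ℝ) 1) ∧ eqLHS hm ap an x = b

/-! The terms are nonnegative, so their maximum is `0` exactly when all of them vanish, and this is
a separate condition on each coordinate. The term `ap j * x j` then forces `x j = 0` unless
`ap j = 0`, while `an j * nP (x j)` forces `x j ≠ 0` unless `an j = 0`: one coefficient has to be
zero, and in that case `x j = 1` or `x j = 0` does the job. -/

theorem nP_nonneg (t : ℝ) : 0 ≤ nP t := by
  unfold nP
  split_ifs <;> norm_num

theorem nP_eq_zero_iff {t : ℝ} : nP t = 0 ↔ t ≠ 0 := by
  simp [nP]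

theorem max_eq_zero_iff_of_nonneg {α : Type*} [LinearOrder α] [Zero α] {a b : α}
    (ha : 0 ≤ a) (hb : 0 ≤ b) : max a b = 0 ↔ a = 0 ∧ b = 0 := by
  rw [← (le_max_of_le_left ha).ge_iff_eq', max_le_iff, ha.ge_iff_eq', hb.ge_iff_eq']

theorem sup'_eq_zero_iff_of_nonneg {ι α : Type*} [SemilatticeSup α] [Zero α] {s : Finset ι}
    (hs : s.Nonempty) {f : ι → α} (hf : ∀ i ∈ s, 0 ≤ f i) :
    s.sup' hs f = 0 ↔ ∀ i ∈ s, f i = 0 := by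
  have hsup : 0 ≤ s.sup' hs f := by
    have ⟨i, hi⟩ := hs
    exact (hf i hi).trans (le_sup' f hi)
  rw [← hsup.ge_iff_eq', sup'_le_iff]
  exact forall₂_congr fun j hj => (hf j hj).ge_iff_eq'

theorem eqLHS_eq_zero_iff {m : ℕ} (hm : 0 < m) {ap an x : Fin m → ℝ}
    (hap : ∀ j, 0 ≤ ap j) (han : ∀ j, 0 ≤ an j) (hx : ∀ j, 0 ≤ x j) :
    eqLHS hm ap an x = 0 ↔ ∀ j, (ap j = 0 ∨ x j = 0) ∧ (an j = 0 ∨ x j ≠ 0) := by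
  have hpos (j) : 0 ≤ ap j * x j := mul_nonneg (hap j) (hx j)
  have hneg (j) : 0 ≤ an j * nP (x j) := mul_nonneg (han j) (nP_nonneg (x j))
  refine (sup'_eq_zero_iff_of_nonneg _ fun j _ => le_max_of_le_left (hpos j)).trans ?_
  simp only [mem_univ, forall_const, max_eq_zero_iff_of_nonneg (hpos _) (hneg _), mul_eq_zero,
    nP_eq_zero_iff]

theorem isSol_zero_iff {m : ℕ} (hm : 0 < m) {ap an x : Fin m → ℝ}
    (hap : ∀ j, 0 ≤ ap j) (han : ∀ j, 0 ≤ an j) :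
    IsSol hm ap an 0 x ↔
      ∀ j, x j ∈ Set.Icc (0 : ℝ) 1 ∧ (ap j = 0 ∨ x j = 0) ∧ (an j = 0 ∨ x j ≠ 0) := by
  rw [forall_and]
  exact and_congr_right fun hx => eqLHS_eq_zero_iff hm hap han fun j => (hx j).1

theorem exists_mem_Icc_or_eq_zero_and_or_ne_zero_iff {p q : Prop} :
    (∃ t ∈ Set.Icc (0 : ℝ) 1, (p ∨ t = 0) ∧ (q ∨ t ≠ 0)) ↔ p ∨ q := by
  constructor
  · rintro ⟨t, -, hp, hq⟩
    tauto
  · rintro (hp | hq)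
    · exact ⟨1, Set.right_mem_Icc.2 zero_le_one, .inl hp, .inr one_ne_zero⟩
    · exact ⟨0, Set.left_mem_Icc.2 zero_le_one, .inr rfl, .inl hq⟩

theorem stmt0_general (m : ℕ) (hm : 0 < m) (ap an : Fin m → ℝ)
    (hap : ∀ j, 0 ≤ ap j) (han : ∀ j, 0 ≤ an j) :
    (∃ x, IsSol hm ap an 0 x) ↔ ∀ j, ap j = 0 ∨ an j = 0 := by
  simp only [isSol_zero_iff hm hap han]
  exact Classical.skolem.symm.trans
    (forall_congr' fun _ => exists_mem_Icc_or_eq_zero_and_or_ne_zero_iff)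

theorem stmt0 (m : ℕ) (hm : 0 < m) (ap an : Fin m → ℝ)
    (hap : ∀ j, ap j ∈ Set.Icc (0:ℝ) 1) (han : ∀ j, an j ∈ Set.Icc (0:ℝ) 1) :
    (∃ x, IsSol hm ap an 0 x) ↔ ∀ j, ap j = 0 ∨ an j = 0 := by
  exact stmt0_general m hm ap an (fun j => (hap j).1) fun j => (han j).1
end

section
/- For b ∈ (0,1], the bipolar max-product fuzzy relation equation max_{j=1..m} max(a_j^+ · x_j, a_j^- · n_P(x_j)) = b has a solution (x_1,...,x_m) ∈ [0,1]^m if and only if either b ≤ max{a_j^+ : j ∈ {1,...,m}} or there exists k ∈ {1,...,m} such that a_k^- = b. -/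
open Finset
open scoped Classical

/-! The coordinates enter a max-equation separately. Hence, as soon as every coordinate can be chosen
so that its own term is at most `b`, the equation is solvable exactly when a single term can attain
the value `b`. For `b > 0` the term `max (p * y) (n * nP y)` attains `b` either at `y = b / p`, which
lies in the unit interval iff `b ≤ p`, or at `y = 0`, which requires `n = b`. -/

theorem exists_pi_sup'_eq_iff {ι β : Type*} {α : ι → Type*} [Fintype ι] [Nonempty ι] [LinearOrder β]
    {S : ∀ j, Set (α j)} {f : ∀ j, α j → β} {b : β} (hle : ∀ j, ∃ y ∈ S j, f j y ≤ b) :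
    (∃ x : ∀ j, α j, (∀ j, x j ∈ S j) ∧ univ.sup' univ_nonempty (fun j => f j (x j)) = b) ↔
      ∃ k, ∃ y ∈ S k, f k y = b := by
  constructor
  · rintro ⟨x, hxS, hxb⟩
    obtain ⟨k, -, hk⟩ := exists_mem_eq_sup' univ_nonempty fun j => f j (x j)
    exact ⟨k, x k, hxS k, hk.symm.trans hxb⟩
  · rintro ⟨k, y, hyS, hyb⟩
    choose z hzS hzb using hle
    refine ⟨Function.update z k y, ?_, le_antisymm (sup'_le _ _ fun j _ => ?_) ?_⟩
    · exact (Function.forall_update_iff z fun j t => t ∈ S j).2 ⟨hyS, fun j _ => hzS j⟩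
    · exact (Function.forall_update_iff z fun j t => f j t ≤ b).2 ⟨hyb.le, fun j _ => hzb j⟩ j
    · exact (le_sup'_iff _).2 ⟨k, mem_univ k, by rw [Function.update_self, hyb]⟩

theorem nP_zero : nP 0 = 1 :=
  if_pos rfl

theorem nP_of_ne_zero {x : ℝ} (hx : x ≠ 0) : nP x = 0 :=
  if_neg hx

section BipolarTerm

variable (p n : ℝ) {b : ℝ}

theorem exists_max_mul_nP_eq_iff (hb : 0 < b) :
    (∃ y ∈ Set.Icc (0 : ℝ) 1, max (p * y) (n * nP y) = b) ↔ b ≤ p ∨ n = b := by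
  constructor
  · rintro ⟨y, ⟨hy0, hy1⟩, hyb⟩
    rcases hy0.eq_or_lt with rfl | hy_pos
    · rw [mul_zero, nP_zero, mul_one] at hyb
      exact .inr ((max_eq_iff.1 hyb).resolve_left fun h => hb.ne h.1).1
    · rw [nP_of_ne_zero hy_pos.ne', mul_zero] at hyb
      have hpy : p * y = b := ((max_eq_iff.1 hyb).resolve_right fun h => hb.ne h.1).1
      have hp : 0 < p := pos_of_mul_pos_left (hpy ▸ hb) hy0
      exact .inl (hpy ▸ mul_le_of_le_one_right hp.le hy1)
  · rintro (hbp | rfl)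
    · have hp : 0 < p := hb.trans_le hbp
      refine ⟨b / p, ⟨(div_pos hb hp).le, (div_le_one hp).2 hbp⟩, ?_⟩
      rw [nP_of_ne_zero (div_pos hb hp).ne', mul_zero, mul_div_cancel₀ b hp.ne', max_eq_left hb.le]
    · refine ⟨0, Set.left_mem_Icc.2 zero_le_one, ?_⟩
      rw [mul_zero, nP_zero, mul_one, max_eq_right hb.le]

theorem exists_max_mul_nP_le (hb : 0 < b) :
    ∃ y ∈ Set.Icc (0 : ℝ) 1, max (p * y) (n * nP y) ≤ b := by
  rcases le_total b p with hbp | hpb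
  · obtain ⟨y, hy, hyb⟩ := (exists_max_mul_nP_eq_iff p n hb).2 (.inl hbp)
    exact ⟨y, hy, hyb.le⟩
  · refine ⟨1, Set.right_mem_Icc.2 zero_le_one, ?_⟩
    rw [nP_of_ne_zero one_ne_zero, mul_one, mul_zero]
    exact max_le hpb hb.le

end BipolarTerm

theorem stmt1_general {ι : Type*} [Fintype ι] [Nonempty ι] (ap an : ι → ℝ) {b : ℝ} (hb : 0 < b) :
    (∃ x : ι → ℝ, (∀ j, x j ∈ Set.Icc (0 : ℝ) 1) ∧
        univ.sup' univ_nonempty (fun j => max (ap j * x j) (an j * nP (x j))) = b) ↔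
      (b ≤ univ.sup' univ_nonempty ap ∨ ∃ k, an k = b) := by
  rw [exists_pi_sup'_eq_iff (S := fun _ => Set.Icc 0 1)
    (f := fun j y => max (ap j * y) (an j * nP y)) fun j => exists_max_mul_nP_le (ap j) (an j) hb]
  simp only [exists_max_mul_nP_eq_iff _ _ hb, exists_or, le_sup'_iff, mem_univ, true_and]

theorem stmt1 (m : ℕ) (hm : 0 < m) (ap an : Fin m → ℝ)
    (hap : ∀ j, ap j ∈ Set.Icc (0:ℝ) 1) (han : ∀ j, an j ∈ Set.Icc (0:ℝ) 1)
    (b : ℝ) (hb0 : 0 < b) (hb1 : b ≤ 1) :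
    (∃ x, IsSol hm ap an b x) ↔
      (b ≤ Finset.univ.sup' ⟨⟨0, hm⟩, Finset.mem_univ _⟩ ap ∨ ∃ k, an k = b) := by
  have : Nonempty (Fin m) := ⟨⟨0, hm⟩⟩
  exact stmt1_general ap an hb0
end

section
/- Let b ∈ (0,1] and suppose the bipolar max-product fuzzy relation equation max_{j=1..m} max(a_j^+ · x_j, a_j^- · n_P(x_j)) = b is solvable. If b ≤ max{a_j^+ : j ∈ {1,...,m}}, then the tuple (b ←_P a_1^+, ..., b ←_P a_m^+) is a solution and is the greatest solution of the equation, i.e., every solution (x_1,...,x_m) satisfies x_j ≤ b ←_P a_j^+ for all j. -/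
open Finset
open scoped Classical

theorem le_resP_iff {x y z : ℝ} (hz : 0 ≤ z) (hx : 0 ≤ x) :
    y ≤ resP z x ↔ y ≤ 1 ∧ x * y ≤ z := by
  obtain rfl | hx := hx.eq_or_lt
  · simp [resP, hz]
  · rw [resP, if_neg hx.ne', le_min_iff, le_div_iff₀' hx]

theorem resP_pos {x z : ℝ} (hz : 0 < z) (hx : 0 ≤ x) : 0 < resP z x := by
  obtain rfl | hx := hx.eq_or_lt
  · simp [resP]
  · rw [resP, if_neg hx.ne']
    exact lt_min one_pos (div_pos hz hx)

theorem mul_resP_of_le {x z : ℝ} (hx : 0 < x) (hzx : z ≤ x) : x * resP z x = z := by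
  rw [resP, if_neg hx.ne', min_eq_right ((div_le_one hx).2 hzx), mul_div_cancel₀ z hx.ne']

section Equation

variable {m : ℕ} {hm : 0 < m} {ap an x : Fin m → ℝ} {b : ℝ}

theorem eqLHS_le_iff :
    eqLHS hm ap an x ≤ b ↔ ∀ j, ap j * x j ≤ b ∧ an j * nP (x j) ≤ b :=
  (Finset.sup'_le_iff _ _).trans (by simp only [Finset.mem_univ, true_imp_iff, max_le_iff])

theorem le_eqLHS_iff :
    b ≤ eqLHS hm ap an x ↔ ∃ j, b ≤ ap j * x j ∨ b ≤ an j * nP (x j) :=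
  (Finset.le_sup'_iff _).trans (by simp only [Finset.mem_univ, true_and, le_max_iff])

theorem IsSol.le_resP (hap : ∀ j, 0 ≤ ap j) (hb : 0 ≤ b) (hx : IsSol hm ap an b x) (j : Fin m) :
    x j ≤ resP b (ap j) :=
  (le_resP_iff hb (hap j)).2 ⟨(hx.1 j).2, (eqLHS_le_iff.1 hx.2.le j).1⟩

theorem isSol_resP (hap : ∀ j, 0 ≤ ap j) (hb : 0 < b) (hle : ∃ j, b ≤ ap j) :
    IsSol hm ap an b (fun j => resP b (ap j)) := by
  have hpos (j : Fin m) : 0 < resP b (ap j) := resP_pos hb (hap j)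
  have hres (j : Fin m) : resP b (ap j) ≤ 1 ∧ ap j * resP b (ap j) ≤ b :=
    (le_resP_iff hb.le (hap j)).1 le_rfl
  refine ⟨fun j => ⟨(hpos j).le, (hres j).1⟩, le_antisymm (eqLHS_le_iff.2 fun j => ?_) ?_⟩
  · have hneg : an j * nP (resP b (ap j)) = 0 := by rw [nP_of_ne_zero (hpos j).ne', mul_zero]
    exact ⟨(hres j).2, hneg.trans_le hb.le⟩
  · obtain ⟨j, hj⟩ := hle
    exact le_eqLHS_iff.2 ⟨j, .inl (mul_resP_of_le (hb.trans_le hj) hj).ge⟩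

end Equation

theorem stmt2_general {m : ℕ} (hm : 0 < m) (ap an : Fin m → ℝ) (hap : ∀ j, 0 ≤ ap j)
    {b : ℝ} (hb : 0 < b) (hle : b ≤ Finset.univ.sup' ⟨⟨0, hm⟩, Finset.mem_univ _⟩ ap) :
    IsGreatest {x | IsSol hm ap an b x} (fun j => resP b (ap j)) := by
  obtain ⟨j, -, hj⟩ := (Finset.le_sup'_iff _).1 hle
  exact ⟨isSol_resP hap hb ⟨j, hj⟩, fun x hx => hx.le_resP hap hb.le⟩

theorem stmt2 (m : ℕ) (hm : 0 < m) (ap an : Fin m → ℝ)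
    (hap : ∀ j, ap j ∈ Set.Icc (0:ℝ) 1) (han : ∀ j, an j ∈ Set.Icc (0:ℝ) 1)
    (b : ℝ) (hb0 : 0 < b) (hb1 : b ≤ 1)
    (hsolv : ∃ x, IsSol hm ap an b x)
    (hble : b ≤ Finset.univ.sup' ⟨⟨0, hm⟩, Finset.mem_univ _⟩ ap) :
    IsSol hm ap an b (fun j => resP b (ap j)) ∧
      ∀ x, IsSol hm ap an b x → ∀ j, x j ≤ resP b (ap j) := by
  obtain ⟨hsol, hgreatest⟩ := stmt2_general hm ap an (fun j => (hap j).1) hb0 hble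
  exact ⟨hsol, fun x hx => hgreatest hx⟩
end

section
/- Let b ∈ (0,1] and suppose the bipolar max-product fuzzy relation equation max_{j=1..m} max(a_j^+ · x_j, a_j^- · n_P(x_j)) = b is solvable. If a_j^+ < b for each j ∈ {1,...,m}, then the set of maximal solutions of the equation is exactly the finite set of tuples (1,...,1, x_k, 1,...,1) with x_k = 0 in position k, for k ranging over K_P^- = {k ∈ {1,...,m} : a_k^- = b}. -/
open Finset
open scoped Classical

/-!
A product `ap j * x j` with `ap j < b` and `x j ∈ [0, 1]` never reaches `b > 0`, so the value `b`
can only come from a negated term, that is, from a coordinate `x k = 0` with `an k = b`. The tuple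
with `0` in position `k` and `1` elsewhere is the largest one vanishing at `k`; these tuples are
solutions, they dominate every solution, and they are pairwise incomparable, hence they are exactly
the maximal solutions.
-/

section Order

theorem finset_sup'_eq_iff {ι α : Type*} [LinearOrder α] {s : Finset ι} (hs : s.Nonempty)
    {f : ι → α} {b : α} : s.sup' hs f = b ↔ (∀ i ∈ s, f i ≤ b) ∧ ∃ i ∈ s, f i = b := by
  constructor
  · rintro rfl
    obtain ⟨k, hk, hkmax⟩ := exists_mem_eq_sup' hs f
    exact ⟨fun i hi => le_sup' f hi, k, hk, hkmax.symm⟩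
  · rintro ⟨hle, k, hk, rfl⟩
    exact le_antisymm (sup'_le hs f hle) (le_sup' f hk)

theorem maximal_iff_mem_of_isAntichain {α : Type*} [PartialOrder α] {P : α → Prop} {t : Set α}
    (ht : IsAntichain (· ≤ ·) t) (htP : ∀ y ∈ t, P y) (hPt : ∀ x, P x → ∃ y ∈ t, x ≤ y) {x : α} :
    Maximal P x ↔ x ∈ t := by
  constructor
  · intro hx
    obtain ⟨y, hy, hxy⟩ := hPt x hx.prop
    rwa [hx.eq_of_le (htP y hy) hxy]
  · intro hx
    refine ⟨htP x hx, fun y hPy hxy => ?_⟩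
    obtain ⟨z, hz, hyz⟩ := hPt y hPy
    rwa [ht.eq hx hz (hxy.trans hyz)]

theorem update_le_update_iff_of_lt {ι : Type*} [DecidableEq ι] {π : ι → Type*}
    [∀ i, Preorder (π i)] {f c : ∀ i, π i} (hc : ∀ i, c i < f i) {k l : ι} :
    Function.update f k (c k) ≤ Function.update f l (c l) ↔ k = l := by
  refine ⟨fun h => ?_, fun h => h ▸ le_rfl⟩
  by_contra hkl
  have hl : f l ≤ c l := by simpa [Ne.symm hkl] using h l
  exact (hc l).not_ge hl

theorem mul_lt_of_lt_of_mem_Icc {R : Type*} [Semiring R] [LinearOrder R] [IsOrderedRing R]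
    {a b t : R} (hab : a < b) (hb : 0 < b) (ht : t ∈ Set.Icc 0 1) : a * t < b :=
  calc
    a * t ≤ max a 0 * t := mul_le_mul_of_nonneg_right (le_max_left a 0) ht.1
    _ ≤ max a 0 := mul_le_of_le_one_right (le_max_right a 0) ht.2
    _ < b := max_lt hab hb

end Order

section ProductNegation

variable {b c t : ℝ}

theorem mul_nP_le_iff (hb : 0 ≤ b) : c * nP t ≤ b ↔ (t = 0 → c ≤ b) := by
  by_cases ht : t = 0 <;> simp [nP, ht, hb]

theorem mul_nP_eq_iff (hb : b ≠ 0) : c * nP t = b ↔ t = 0 ∧ c = b := by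
  by_cases ht : t = 0 <;> simp [nP, ht, hb.symm]

end ProductNegation

section Solutions

variable {m : ℕ} {hm : 0 < m} {ap an x : Fin m → ℝ} {b : ℝ}

theorem eqLHS_eq_iff :
    eqLHS hm ap an x = b ↔ (∀ j, max (ap j * x j) (an j * nP (x j)) ≤ b) ∧
      ∃ k, max (ap k * x k) (an k * nP (x k)) = b := by
  have huniv : (univ : Finset (Fin m)).Nonempty := ⟨⟨0, hm⟩, mem_univ _⟩
  refine (finset_sup'_eq_iff huniv).trans ?_
  simp only [mem_univ, true_and, forall_const]

theorem isSol_iff (hb : 0 < b) (hlt : ∀ j, ap j < b) :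
    IsSol hm ap an b x ↔ (∀ j, x j ∈ Set.Icc (0 : ℝ) 1) ∧ (∀ j, x j = 0 → an j ≤ b) ∧
      ∃ k, x k = 0 ∧ an k = b := by
  refine and_congr_right fun hx => ?_
  have hprod : ∀ j, ap j * x j < b := fun j => mul_lt_of_lt_of_mem_Icc (hlt j) hb (hx j)
  have hle : ∀ j, max (ap j * x j) (an j * nP (x j)) ≤ b ↔ (x j = 0 → an j ≤ b) := fun j => by
    rw [max_le_iff, and_iff_right (hprod j).le, mul_nP_le_iff hb.le]
  have heq : ∀ j, max (ap j * x j) (an j * nP (x j)) = b ↔ x j = 0 ∧ an j = b := fun j => by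
    rw [← mul_nP_eq_iff hb.ne', max_eq_iff, or_iff_right fun h => (hprod j).ne h.1]
    exact and_iff_left_of_imp fun h => (hprod j).le.trans_eq h.symm
  simp only [eqLHS_eq_iff, hle, heq]

theorem isSol_update_one_zero (hb : 0 < b) (hlt : ∀ j, ap j < b) {k : Fin m} (hk : an k = b) :
    IsSol hm ap an b (Function.update (1 : Fin m → ℝ) k 0) := by
  have hzero : ∀ j, Function.update (1 : Fin m → ℝ) k 0 j = 0 ↔ j = k := fun j => by
    by_cases h : j = k <;> simp [h]
  refine (isSol_iff hb hlt).2 ⟨fun j => ?_, fun j hj => ?_, k, (hzero k).2 rfl, hk⟩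
  · by_cases h : j = k <;> simp [h]
  · rw [(hzero j).1 hj, hk]

theorem exists_le_update_one_zero (hb : 0 < b) (hlt : ∀ j, ap j < b) (hx : IsSol hm ap an b x) :
    ∃ k, an k = b ∧ x ≤ Function.update (1 : Fin m → ℝ) k 0 := by
  obtain ⟨hmem, -, k, hxk, hk⟩ := (isSol_iff hb hlt).1 hx
  exact ⟨k, hk, le_update_iff.2 ⟨hxk.le, fun j _ => (hmem j).2⟩⟩

theorem stmt3_general (hb : 0 < b) (hlt : ∀ j, ap j < b) :
    Maximal (IsSol hm ap an b) x ↔ ∃ k, an k = b ∧ x = Function.update (1 : Fin m → ℝ) k 0 := by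
  have hanti : IsAntichain (· ≤ ·)
      {y | ∃ k, an k = b ∧ y = Function.update (1 : Fin m → ℝ) k 0} := by
    rintro _ ⟨k, -, rfl⟩ _ ⟨l, -, rfl⟩ hne hle
    have hkl : k = l := (update_le_update_iff_of_lt (c := 0) fun _ => zero_lt_one).1 hle
    exact hne (hkl ▸ rfl)
  refine maximal_iff_mem_of_isAntichain hanti ?_ fun y hy => ?_
  · rintro _ ⟨k, hk, rfl⟩
    exact isSol_update_one_zero hb hlt hk
  · obtain ⟨k, hk, hle⟩ := exists_le_update_one_zero hb hlt hy
    exact ⟨_, ⟨k, hk, rfl⟩, hle⟩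

end Solutions

theorem stmt3 (m : ℕ) (hm : 0 < m) (ap an : Fin m → ℝ)
    (hap : ∀ j, ap j ∈ Set.Icc (0:ℝ) 1) (han : ∀ j, an j ∈ Set.Icc (0:ℝ) 1)
    (b : ℝ) (hb0 : 0 < b) (hb1 : b ≤ 1)
    (hsolv : ∃ x, IsSol hm ap an b x)
    (hlt : ∀ j, ap j < b) :
    {x | IsSol hm ap an b x ∧ ∀ y, IsSol hm ap an b y → ¬ x < y} =
      {x | ∃ k : Fin m, an k = b ∧ x = fun j => if j = k then (0:ℝ) else 1} := by
  ext x
  simpa [maximal_iff_forall_gt, imp_not_comm, funext_iff, Function.update_apply] using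
    stmt3_general (hm := hm) (an := an) (x := x) hb0 hlt
end

section
/- If (x_1,...,x_m) ∈ [0,1]^m is a solution of the system of bipolar max-product fuzzy relation equations max_{j=1..m} max(a_{ij}^+ · x_j, a_{ij}^- · n_P(x_j)) = b_i, i ∈ {1,...,n}, then the pair (J^+, J^-) with J^+ = {j ∈ {1,...,m} : x_j > 0} and J^- = {j ∈ {1,...,m} : x_j = 0} is a feasible pair with respect to the system. -/
open Finset
open scoped Classical

/-- `x` is a solution of the system of bipolar max-product FREs with coefficient
matrices `ap`, `an` and independent terms `b`. -/
def SysSol {m n : ℕ} (hm : 0 < m) (ap an : Fin n → Fin m → ℝ) (b : Fin n → ℝ)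
    (x : Fin m → ℝ) : Prop :=
  (∀ j, x j ∈ Set.Icc (0:ℝ) 1) ∧ ∀ i, eqLHS hm (ap i) (an i) x = b i

/-- `(Jp, Jm)` is a feasible pair of index sets with respect to the system. -/
def FeasiblePair {m n : ℕ} (ap an : Fin n → Fin m → ℝ) (b : Fin n → ℝ)
    (Jp Jm : Finset (Fin m)) : Prop :=
  Jp ∪ Jm = Finset.univ ∧ Jp ∩ Jm = ∅ ∧
    ∀ i,
      (b i = 0 → (∀ j ∈ Jp, ap i j = 0) ∧ ∀ j ∈ Jm, an i j = 0) ∧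
      (0 < b i →
        (∃ j ∈ Jp, b i ≤ ap i j ∧ ∀ h, resP (b i) (ap i j) ≤ resP (b h) (ap h j)) ∨
        (∃ j ∈ Jm, an i j = b i ∧ ∀ h, an h j ≤ b h))

theorem resP_le_of_le_mul {w x z : ℝ} (hx : 0 < x) (h : z ≤ x * w) : resP z x ≤ w := by
  rw [resP, if_neg hx.ne']
  exact (min_le_right _ _).trans ((div_le_iff₀' hx).2 h)

theorem le_resP_of_mul_le {w x z : ℝ} (hx : 0 ≤ x) (hw : w ≤ 1) (h : x * w ≤ z) :
    w ≤ resP z x := by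
  rcases hx.eq_or_lt' with rfl | hpos
  · rwa [resP, if_pos rfl]
  · rw [resP, if_neg hpos.ne']
    exact le_min hw ((le_div_iff₀' hpos).2 h)

section Equation

variable {m : ℕ} (hm : 0 < m) (ap an x : Fin m → ℝ)

theorem max_le_eqLHS (j : Fin m) : max (ap j * x j) (an j * nP (x j)) ≤ eqLHS hm ap an x :=
  Finset.le_sup' (fun j => max (ap j * x j) (an j * nP (x j))) (Finset.mem_univ j)

theorem mul_le_eqLHS (j : Fin m) : ap j * x j ≤ eqLHS hm ap an x :=
  (le_max_left _ _).trans (max_le_eqLHS hm ap an x j)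

theorem le_eqLHS_of_eq_zero {j : Fin m} (hj : x j = 0) : an j ≤ eqLHS hm ap an x := by
  simpa only [hj, nP_zero, mul_one] using
    (le_max_right _ _).trans (max_le_eqLHS hm ap an x j)

theorem exists_eqLHS_eq_max :
    ∃ j, eqLHS hm ap an x = max (ap j * x j) (an j * nP (x j)) := by
  obtain ⟨j, -, hj⟩ := Finset.exists_mem_eq_sup' ⟨⟨0, hm⟩, Finset.mem_univ _⟩
    (fun j => max (ap j * x j) (an j * nP (x j)))
  exact ⟨j, hj⟩

variable {hm ap an x}

theorem exists_eqLHS_eq_of_pos (hpos : 0 < eqLHS hm ap an x) :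
    (∃ j, x j ≠ 0 ∧ eqLHS hm ap an x = ap j * x j) ∨
      ∃ j, x j = 0 ∧ eqLHS hm ap an x = an j := by
  obtain ⟨j, hj⟩ := exists_eqLHS_eq_max hm ap an x
  by_cases hxj : x j = 0
  · rw [hxj, nP_zero, mul_zero, mul_one] at hj
    have han : 0 < an j := (lt_max_iff.1 (hj ▸ hpos)).resolve_left (lt_irrefl 0)
    exact Or.inr ⟨j, hxj, hj.trans (max_eq_right han.le)⟩
  · rw [nP_of_ne_zero hxj, mul_zero] at hj
    have hap : 0 < ap j * x j := (lt_max_iff.1 (hj ▸ hpos)).resolve_right (lt_irrefl 0)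
    exact Or.inl ⟨j, hxj, hj.trans (max_eq_left hap.le)⟩

end Equation

namespace SysSol

variable {m n : ℕ} {hm : 0 < m} {ap an : Fin n → Fin m → ℝ} {b : Fin n → ℝ} {x : Fin m → ℝ}

theorem nonneg (hx : SysSol hm ap an b x) (j : Fin m) : 0 ≤ x j := (hx.1 j).1

theorem le_one (hx : SysSol hm ap an b x) (j : Fin m) : x j ≤ 1 := (hx.1 j).2

theorem ap_mul_le (hx : SysSol hm ap an b x) (i : Fin n) (j : Fin m) : ap i j * x j ≤ b i :=
  (mul_le_eqLHS hm (ap i) (an i) x j).trans_eq (hx.2 i)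

theorem an_le_of_eq_zero (hx : SysSol hm ap an b x) (i : Fin n) {j : Fin m} (hj : x j = 0) :
    an i j ≤ b i :=
  (le_eqLHS_of_eq_zero hm (ap i) (an i) x hj).trans_eq (hx.2 i)

theorem le_resP (hx : SysSol hm ap an b x) {i : Fin n} {j : Fin m} (hap : 0 ≤ ap i j) :
    x j ≤ resP (b i) (ap i j) :=
  le_resP_of_mul_le hap (hx.le_one j) (hx.ap_mul_le i j)

theorem resP_le_resP_of_eq_mul (hx : SysSol hm ap an b x) {i h : Fin n} {j : Fin m}
    (hi : 0 < ap i j) (hh : 0 ≤ ap h j) (hb : b i = ap i j * x j) :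
    resP (b i) (ap i j) ≤ resP (b h) (ap h j) :=
  (resP_le_of_le_mul hi hb.le).trans (hx.le_resP hh)

theorem ap_eq_zero_of_pos (hx : SysSol hm ap an b x) {i : Fin n} {j : Fin m} (hap : 0 ≤ ap i j)
    (hb : b i = 0) (hj : 0 < x j) : ap i j = 0 :=
  (nonpos_of_mul_nonpos_left ((hx.ap_mul_le i j).trans_eq hb) hj).antisymm hap

theorem an_eq_zero_of_eq_zero (hx : SysSol hm ap an b x) {i : Fin n} {j : Fin m}
    (han : 0 ≤ an i j) (hb : b i = 0) (hj : x j = 0) : an i j = 0 :=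
  ((hx.an_le_of_eq_zero i hj).trans_eq hb).antisymm han

theorem exists_eq_of_pos (hx : SysSol hm ap an b x) {i : Fin n} (hb : 0 < b i) :
    (∃ j, 0 < x j ∧ b i = ap i j * x j) ∨ ∃ j, x j = 0 ∧ b i = an i j := by
  rw [← hx.2 i] at hb ⊢
  simpa only [(hx.nonneg _).lt_iff_ne'] using exists_eqLHS_eq_of_pos hb

theorem filter_pos_union_filter_eq_zero (hx : SysSol hm ap an b x) :
    univ.filter (fun j => 0 < x j) ∪ univ.filter (fun j => x j = 0) = univ := by
  rw [← filter_or]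
  exact filter_true_of_mem fun j _ => (hx.nonneg j).lt_or_eq'

end SysSol

theorem stmt12_general {m n : ℕ} {hm : 0 < m} {ap an : Fin n → Fin m → ℝ} {b : Fin n → ℝ}
    {x : Fin m → ℝ} (hap : ∀ i j, 0 ≤ ap i j) (han : ∀ i j, 0 ≤ an i j)
    (hx : SysSol hm ap an b x) :
    FeasiblePair ap an b
      (Finset.univ.filter (fun j => 0 < x j))
      (Finset.univ.filter (fun j => x j = 0)) := by
  have hdisj : Disjoint (univ.filter fun j => 0 < x j) (univ.filter fun j => x j = 0) :=
    disjoint_filter.2 fun _ _ hpos => hpos.ne'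
  refine ⟨hx.filter_pos_union_filter_eq_zero, disjoint_iff_inter_eq_empty.1 hdisj,
    fun i => ⟨fun hb => ?_, fun hb => ?_⟩⟩
  · exact ⟨fun j hj => hx.ap_eq_zero_of_pos (hap i j) hb ((mem_filter_univ j).1 hj),
      fun j hj => hx.an_eq_zero_of_eq_zero (han i j) hb ((mem_filter_univ j).1 hj)⟩
  · rcases hx.exists_eq_of_pos hb with ⟨j, hj, hbj⟩ | ⟨j, hj, hbj⟩
    · have hpos : 0 < ap i j := pos_of_mul_pos_left (hbj ▸ hb) hj.le
      have hle : b i ≤ ap i j := hbj.trans_le (mul_le_of_le_one_right (hap i j) (hx.le_one j))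
      exact Or.inl ⟨j, (mem_filter_univ j).2 hj, hle,
        fun h => hx.resP_le_resP_of_eq_mul hpos (hap h j) hbj⟩
    · exact Or.inr ⟨j, (mem_filter_univ j).2 hj, hbj.symm, fun h => hx.an_le_of_eq_zero h hj⟩

theorem stmt12 (m n : ℕ) (hm : 0 < m) (hn : 0 < n)
    (ap an : Fin n → Fin m → ℝ) (b : Fin n → ℝ)
    (hap : ∀ i j, ap i j ∈ Set.Icc (0:ℝ) 1) (han : ∀ i j, an i j ∈ Set.Icc (0:ℝ) 1)
    (hb : ∀ i, b i ∈ Set.Icc (0:ℝ) 1)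
    (x : Fin m → ℝ) (hx : SysSol hm ap an b x) :
    FeasiblePair ap an b
      (Finset.univ.filter (fun j => 0 < x j))
      (Finset.univ.filter (fun j => x j = 0)) := by
  exact stmt12_general (fun i j => (hap i j).1) (fun i j => (han i j).1) hx
end
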